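/- arXiv:1903.09268 — 4 statements merged into one kernel-verified Lean document; each statement's English description precedes it below -/
import Mathlib

section
/- For ν = 8π, the infimum over d ≥ 0 of C_ν(d) is attained at d = 0, and its value is C_{8π}(0) = 2π(1 + 4Γ + 2 ln π), where Γ is the Euler–Mascheroni constant. -/
open Real

/-- The constant `C_ν(d)` from the second-order term of the 2D ground state energy. -/
noncomputable def Cnu (ν d : ℝ) : ℝ :=
  (1 - (1 / (8 * π)) * (Real.sqrt (d * (d + 16 * π)) - d)) * (2 * ν - 16 * π - d)
    + d ^ 2 / (16 * π) + 2 * π + d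
    - 4 * π * (Real.log 8 - 2 * Real.eulerMascheroniConstant)
    - (1 / (16 * π)) * d * Real.sqrt (d * (d + 16 * π))
    - (1 / 2) * Real.sqrt (d * (d + 16 * π))
    + 4 * π * Real.log (d + Real.sqrt (d * (d + 16 * π)) + 8 * π)


theorem Cnu_zero_val : Cnu (8 * π) 0 =
        2 * π * (1 + 4 * Real.eulerMascheroniConstant + 2 * Real.log π) := by
  have hp := Real.pi_pos
  simp only [Cnu]
  simp
  rw [Real.log_mul (by norm_num) hp.ne']
  ring

/-- Nonnegativity after the substitution `x = (d + s) / (8π)`. -/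
theorem Cnu_ge (d : ℝ) (hd : 0 ≤ d) : Cnu (8 * π) 0 ≤ Cnu (8 * π) d := by
  have hp := Real.pi_pos
  rw [Cnu_zero_val]
  unfold Cnu
  have hs0 := Real.sqrt_nonneg (d * (d + 16 * π))
  have hs2 := Real.sq_sqrt (show 0 ≤ d * (d + 16 * π) by positivity)
  set s := Real.sqrt (d * (d + 16 * π)) with hs
  clear_value s
  obtain ⟨x, hx⟩ : ∃ x, x = (d + s) / (8 * π) := ⟨_, rfl⟩
  have hx0 : 0 ≤ x := by rw [hx]; positivity
  have hsx : s = 8 * π * x - d := by rw [hx]; field_simp; ring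
  have hdx : d = 4 * π * x ^ 2 / (1 + x) := by
    rw [hsx] at hs2
    rw [eq_div_iff (by positivity)]
    have : (16 * π) * (d * (1 + x)) = (16 * π) * (4 * π * x ^ 2) := by linarith
    exact mul_left_cancel₀ (by positivity) this
  have hlog : Real.log (d + s + 8 * π) = Real.log 8 + Real.log π + Real.log (1 + x) := by
    rw [← Real.log_mul (by norm_num) hp.ne', ← Real.log_mul (by positivity) (by positivity)]
    congr 1
    rw [hsx]; ring
  have hl := Real.le_log_one_add_of_nonneg hx0
  rw [hlog]
  have key : 3 / 2 - 2 / (1 + x) + 1 / (2 * (1 + x) ^ 2) ≤ Real.log (1 + x) := by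
    refine le_trans ?_ hl
    rw [← sub_nonneg]
    have : 2 * x / (x + 2) - (3 / 2 - 2 / (1 + x) + 1 / (2 * (1 + x) ^ 2))
      = x ^ 3 / (2 * (x + 2) * (1 + x) ^ 2) := by field_simp; ring
    rw [this]; positivity
  have h4 := mul_le_mul_of_nonneg_left key (show 0 ≤ 4 * π by positivity)
  have alg : (1 - (1 / (8 * π)) * (s - d)) * (2 * (8 * π) - 16 * π - d)
    + d ^ 2 / (16 * π) + d - (1 / (16 * π)) * d * s - (1 / 2) * s
    = - (4 * π * (3 / 2 - 2 / (1 + x) + 1 / (2 * (1 + x) ^ 2))) := by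
    rw [hsx, hdx]; field_simp; ring
  linarith

theorem Cnu_inf_at_zero :
    IsLeast {c : ℝ | ∃ d : ℝ, 0 ≤ d ∧ c = Cnu (8 * π) d} (Cnu (8 * π) 0) ∧
      Cnu (8 * π) 0 =
        2 * π * (1 + 4 * Real.eulerMascheroniConstant + 2 * Real.log π) := by
  refine ⟨⟨⟨0, le_rfl, rfl⟩, ?_⟩, Cnu_zero_val⟩
  rintro c ⟨d, hd, rfl⟩
  exact Cnu_ge d hd
end

section
/- Let V: ℝ² → ℝ be smooth, nonnegative and supported in the ball B(0,R), let a > 0, and suppose w₀ ∈ C²(ℝ²) satisfies −Δw₀ + ½Vw₀ = 0 on ℝ² and w₀(x) = ln(|x|/a) for all |x| ≥ R. Then ½∫_{ℝ²} V(x)w₀(x)dx = 2π. -/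
open MeasureTheory Real

/-- The Laplacian of a function on `ℝ²`, as the sum of the repeated second partial
derivatives in the coordinate directions. -/
noncomputable def laplacian2 (f : EuclideanSpace ℝ (Fin 2) → ℝ)
    (x : EuclideanSpace ℝ (Fin 2)) : ℝ :=
  ∑ i : Fin 2,
    fderiv ℝ (fun y => fderiv ℝ f y (EuclideanSpace.single i 1)) x (EuclideanSpace.single i 1)

/-- The linear parametrization of the Euclidean plane by `ℝ × ℝ`. -/
noncomputable def planeMap : ℝ × ℝ →L[ℝ] EuclideanSpace ℝ (Fin 2) :=
  (ContinuousLinearMap.fst ℝ ℝ ℝ).smulRight (EuclideanSpace.single 0 1) +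
    (ContinuousLinearMap.snd ℝ ℝ ℝ).smulRight (EuclideanSpace.single 1 1)

lemma planeMap_apply_zero (p : ℝ × ℝ) : planeMap p 0 = p.1 := by
  simp [planeMap]

lemma planeMap_apply_one (p : ℝ × ℝ) : planeMap p 1 = p.2 := by
  simp [planeMap]

lemma planeMap_e0 : planeMap (1, 0) = EuclideanSpace.single 0 1 := by
  simp [planeMap]

lemma planeMap_e1 : planeMap (0, 1) = EuclideanSpace.single 1 1 := by
  simp [planeMap]

lemma planeMap_norm_sq (p : ℝ × ℝ) : ‖planeMap p‖ ^ 2 = p.1 ^ 2 + p.2 ^ 2 := by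
  rw [EuclideanSpace.norm_sq_eq]
  simp [planeMap_apply_zero, planeMap_apply_one]

lemma integral_planeMap (f : EuclideanSpace ℝ (Fin 2) → ℝ) :
    ∫ p : ℝ × ℝ, f (planeMap p) = ∫ x, f x := by
  have h1 := (PiLp.volume_preserving_toLp (Fin 2)).integral_comp
    (MeasurableEquiv.toLp 2 _).measurableEmbedding f
  have h2 := ((volume_preserving_finTwoArrow ℝ).symm _).integral_comp
    (MeasurableEquiv.finTwoArrow (α := ℝ)).symm.measurableEmbedding
    (fun y => f (WithLp.toLp 2 y))
  rw [← h1, ← h2]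
  congr 1
  ext p
  congr 1
  ext i
  fin_cases i
  · simpa using planeMap_apply_zero p
  · simpa using planeMap_apply_one p

lemma fderiv_log_norm (a : ℝ) (ha : 0 < a) (x : EuclideanSpace ℝ (Fin 2)) (hx : x ≠ 0)
    (i : Fin 2) :
    fderiv ℝ (fun y : EuclideanSpace ℝ (Fin 2) => Real.log (‖y‖ / a)) x
      (EuclideanSpace.single i 1) = x i / ‖x‖ ^ 2 := by
  have hn : ‖x‖ ^ 2 ≠ 0 := by positivity
  have h := (((hasStrictFDerivAt_norm_sq x).hasFDerivAt.log hn).const_mul (1 / 2 : ℝ)).sub_const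
    (Real.log a)
  have heq : (fun y : EuclideanSpace ℝ (Fin 2) => Real.log (‖y‖ / a)) =ᶠ[nhds x]
      fun y => 1 / 2 * Real.log (‖y‖ ^ 2) - Real.log a := by
    filter_upwards [isOpen_ne.mem_nhds hx] with y hy
    have : ‖y‖ ≠ 0 := norm_ne_zero_iff.2 hy
    rw [Real.log_div this ha.ne', Real.log_pow]
    push_cast
    ring
  rw [(h.congr_of_eventuallyEq heq).fderiv]
  simp [EuclideanSpace.inner_single_right]
  field_simp

lemma side_integral (L : ℝ) (hL : 0 < L) :
    ∫ y in (-L)..L, L / (L ^ 2 + y ^ 2) = π / 2 := by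
  have : ∀ y : ℝ, L / (L ^ 2 + y ^ 2) = L * (L ^ 2 + y ^ 2)⁻¹ := fun y => div_eq_mul_inv _ _
  simp only [this]
  rw [intervalIntegral.integral_const_mul, integral_inv_sq_add_sq hL.ne']
  rw [neg_div, div_self hL.ne', Real.arctan_neg, Real.arctan_one]
  field_simp
  ring

/-- if `V : ℝ² → ℝ` is smooth, nonnegative, supported in `B(0,R)`, `a > 0`,
and `w₀ ∈ C²` satisfies the scattering equation `−Δw₀ + ½Vw₀ = 0` on `ℝ²` with
`w₀(x) = ln(|x|/a)` for `|x| ≥ R`, then `½∫ V w₀ = 2π`. -/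
theorem scattering_normalization
    (V w₀ : EuclideanSpace ℝ (Fin 2) → ℝ) (R a : ℝ)
    (hV_smooth : ContDiff ℝ (⊤ : ℕ∞) V) (hV_nonneg : ∀ x, 0 ≤ V x)
    (hV_supp : Function.support V ⊆ Metric.ball 0 R)
    (ha : 0 < a)
    (hw_C2 : ContDiff ℝ 2 w₀)
    (hscatt : ∀ x, -laplacian2 w₀ x + (1 / 2) * V x * w₀ x = 0)
    (hw_out : ∀ x : EuclideanSpace ℝ (Fin 2), R ≤ ‖x‖ → w₀ x = Real.log (‖x‖ / a)) :
    (1 / 2) * ∫ x, V x * w₀ x = 2 * π := by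
  have hVw : Continuous fun x => (1 / 2) * V x * w₀ x :=
    (continuous_const.mul hV_smooth.continuous).mul hw_C2.continuous
  have hlap : ∀ x, laplacian2 w₀ x = (1 / 2) * V x * w₀ x := fun x => by linarith [hscatt x]
  obtain ⟨L, hL0, hRL⟩ : ∃ L : ℝ, 0 < L ∧ R < L :=
    ⟨max R 0 + 1, by positivity, by linarith [le_max_left R 0]⟩
  -- first derivatives outside
  have hout : ∀ (x : EuclideanSpace ℝ (Fin 2)) (i : Fin 2), L ≤ ‖x‖ →
      fderiv ℝ w₀ x (EuclideanSpace.single i 1) = x i / ‖x‖ ^ 2 := by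
    intro x i hx
    have hx0 : x ≠ 0 := norm_pos_iff.1 (hL0.trans_le hx)
    rw [← fderiv_log_norm a ha x hx0 i]
    have : w₀ =ᶠ[nhds x] fun y => Real.log (‖y‖ / a) := by
      have ho : IsOpen {y : EuclideanSpace ℝ (Fin 2) | R < ‖y‖} :=
        isOpen_lt continuous_const continuous_norm
      filter_upwards [ho.mem_nhds (show R < ‖x‖ by linarith)] with y hy
      exact hw_out y (le_of_lt hy)
    rw [this.fderiv_eq]
  have hC1 : ∀ i : Fin 2, ContDiff ℝ 1
      (fun y => fderiv ℝ w₀ y (EuclideanSpace.single i 1)) := fun i =>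
    (hw_C2.fderiv_right (m := 1) (by norm_num)).clm_apply contDiff_const
  set F : Fin 2 → EuclideanSpace ℝ (Fin 2) → ℝ :=
    fun i y => fderiv ℝ w₀ y (EuclideanSpace.single i 1) with hF
  have hder : ∀ (i : Fin 2) (p : ℝ × ℝ), HasFDerivAt (fun p => F i (planeMap p))
      ((fderiv ℝ (F i) (planeMap p)).comp planeMap) p := fun i p =>
    (((hC1 i).differentiable one_ne_zero) (planeMap p)).hasFDerivAt.comp p planeMap.hasFDerivAt
  have hdiv : ∀ p : ℝ × ℝ, ((fderiv ℝ (F 0) (planeMap p)).comp planeMap) (1, 0) +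
      ((fderiv ℝ (F 1) (planeMap p)).comp planeMap) (0, 1) =
      (1 / 2) * V (planeMap p) * w₀ (planeMap p) := by
    intro p
    rw [← hlap, laplacian2, Fin.sum_univ_two]
    simp only [ContinuousLinearMap.comp_apply, planeMap_e0, planeMap_e1, hF]
  have hcont : ∀ i, Continuous fun p => F i (planeMap p) := fun i =>
    (hC1 i).continuous.comp planeMap.continuous
  have key := integral_divergence_prod_Icc_of_hasFDerivAt_of_le
    (fun p => F 0 (planeMap p)) (fun p => F 1 (planeMap p))
    (fun p => (fderiv ℝ (F 0) (planeMap p)).comp planeMap)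
    (fun p => (fderiv ℝ (F 1) (planeMap p)).comp planeMap)
    (-L, -L) (L, L) ⟨by simp; linarith, by simp; linarith⟩
    (hcont 0).continuousOn (hcont 1).continuousOn
    (fun p _ => hder 0 p) (fun p _ => hder 1 p)
    (by
      simp only [hdiv]
      exact (hVw.comp planeMap.continuous).continuousOn.integrableOn_compact isCompact_Icc)
  simp only [hdiv] at key
  have habs : ∀ p : ℝ × ℝ, L ^ 2 ≤ p.1 ^ 2 + p.2 ^ 2 → L ≤ ‖planeMap p‖ := by
    intro p hp
    rw [← planeMap_norm_sq] at hp
    exact le_of_sq_le_sq hp (norm_nonneg _)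
  have hF0 : ∀ p : ℝ × ℝ, L ^ 2 ≤ p.1 ^ 2 + p.2 ^ 2 →
      F 0 (planeMap p) = p.1 / (p.1 ^ 2 + p.2 ^ 2) := by
    intro p hp
    rw [← planeMap_norm_sq, ← planeMap_apply_zero p]
    exact hout _ 0 (habs p hp)
  have hF1 : ∀ p : ℝ × ℝ, L ^ 2 ≤ p.1 ^ 2 + p.2 ^ 2 →
      F 1 (planeMap p) = p.2 / (p.1 ^ 2 + p.2 ^ 2) := by
    intro p hp
    rw [← planeMap_norm_sq, ← planeMap_apply_one p]
    exact hout _ 1 (habs p hp)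
  have s1 : ∀ x : ℝ, F 1 (planeMap (x, L)) = L / (L ^ 2 + x ^ 2) := fun x => by
    rw [hF1 _ (by simp; positivity), add_comm]
  have s2 : ∀ x : ℝ, F 1 (planeMap (x, -L)) = -(L / (L ^ 2 + x ^ 2)) := fun x => by
    rw [hF1 _ (by simp; positivity), add_comm, neg_sq, neg_div]
  have s3 : ∀ x : ℝ, F 0 (planeMap (L, x)) = L / (L ^ 2 + x ^ 2) := fun x => by
    rw [hF0 _ (by simp; positivity)]
  have s4 : ∀ x : ℝ, F 0 (planeMap (-L, x)) = -(L / (L ^ 2 + x ^ 2)) := fun x => by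
    rw [hF0 _ (by simp; positivity), neg_sq, neg_div]
  simp only [s1, s2, s3, s4, intervalIntegral.integral_neg, side_integral L hL0] at key
  rw [setIntegral_eq_integral_of_forall_compl_eq_zero, integral_planeMap
    (fun x => (1 / 2) * V x * w₀ x)] at key
  · rw [← integral_const_mul]
    simp only [← mul_assoc]
    rw [key]
    ring
  · intro p hp
    have : V (planeMap p) = 0 := by
      by_contra h
      have h1 := hV_supp h
      rw [mem_ball_zero_iff] at h1
      have h2 := planeMap_norm_sq p
      have h3 : ‖planeMap p‖ ^ 2 ≤ L ^ 2 := pow_le_pow_left₀ (norm_nonneg _) (by linarith) 2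
      have h4 := abs_le_of_sq_le_sq' (show p.1 ^ 2 ≤ L ^ 2 by nlinarith [sq_nonneg p.2]) hL0.le
      have h5 := abs_le_of_sq_le_sq' (show p.2 ^ 2 ≤ L ^ 2 by nlinarith [sq_nonneg p.1]) hL0.le
      exact hp ⟨⟨h4.1, h5.1⟩, ⟨h4.2, h5.2⟩⟩
    rw [this]
    ring
end

section
/- For every d ≥ 0, the integral ∫₀^∞ ((p²+d+8π)/√((p²+d)² + 16π(p²+d)) − 1) p dp converges and equals 4π − ½(√(d(d+16π)) − d). -/
open MeasureTheory Real

/-- for every `d ≥ 0`, the integral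
`∫₀^∞ ((p²+d+8π)/√((p²+d)² + 16π(p²+d)) − 1) p dp` converges and equals
`4π − ½(√(d(d+16π)) − d)`. -/
theorem integral_density_constant (d : ℝ) (hd : 0 ≤ d) :
    IntegrableOn
      (fun p : ℝ =>
        ((p ^ 2 + d + 8 * π) / Real.sqrt ((p ^ 2 + d) ^ 2 + 16 * π * (p ^ 2 + d)) - 1) * p)
      (Set.Ioi 0) ∧
    ∫ p in Set.Ioi (0 : ℝ),
        ((p ^ 2 + d + 8 * π) / Real.sqrt ((p ^ 2 + d) ^ 2 + 16 * π * (p ^ 2 + d)) - 1) * p =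
      4 * π - (Real.sqrt (d * (d + 16 * π)) - d) / 2 := by
  have hpi : 0 < π := Real.pi_pos
  have hcont : ContinuousWithinAt (fun p : ℝ =>
      (Real.sqrt ((p ^ 2 + d) ^ 2 + 16 * π * (p ^ 2 + d)) - (p ^ 2 + d)) / 2)
      (Set.Ici 0) 0 := by
    apply Continuous.continuousWithinAt
    fun_prop
  have hpos : ∀ p ∈ Set.Ioi (0 : ℝ), 0 < (p ^ 2 + d) ^ 2 + 16 * π * (p ^ 2 + d) := by
    intro p hp
    have hp' : 0 < p := hp
    positivity
  have hle : ∀ p : ℝ, Real.sqrt ((p ^ 2 + d) ^ 2 + 16 * π * (p ^ 2 + d)) ≤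
      p ^ 2 + d + 8 * π := by
    intro p
    apply Real.sqrt_le_iff.mpr
    constructor
    · positivity
    · nlinarith [sq_nonneg π]
  have hderiv : ∀ p ∈ Set.Ioi (0 : ℝ), HasDerivAt (fun p : ℝ =>
      (Real.sqrt ((p ^ 2 + d) ^ 2 + 16 * π * (p ^ 2 + d)) - (p ^ 2 + d)) / 2)
      (((p ^ 2 + d + 8 * π) / Real.sqrt ((p ^ 2 + d) ^ 2 + 16 * π * (p ^ 2 + d)) - 1) * p) p := by
    intro p hp
    have h0 := hpos p hp
    have hs := Real.sqrt_pos.mpr h0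
    have hu : HasDerivAt (fun p : ℝ => p ^ 2 + d) (2 * p) p := by
      simpa using (hasDerivAt_pow 2 p).add_const d
    have h := ((((hu.pow 2).add (hu.const_mul (16 * π))).sqrt h0.ne').sub hu).div_const 2
    refine h.congr_deriv ?_
    simp only [Pi.add_apply, Pi.pow_apply]
    field_simp
    push_cast
    ring
  have hnn : ∀ p ∈ Set.Ioi (0 : ℝ), 0 ≤
      ((p ^ 2 + d + 8 * π) / Real.sqrt ((p ^ 2 + d) ^ 2 + 16 * π * (p ^ 2 + d)) - 1) * p := by
    intro p hp
    have hs := Real.sqrt_pos.mpr (hpos p hp)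
    apply mul_nonneg _ (le_of_lt hp)
    rw [sub_nonneg, le_div_iff₀ hs, one_mul]
    exact hle p
  have hlim : Filter.Tendsto (fun p : ℝ =>
      (Real.sqrt ((p ^ 2 + d) ^ 2 + 16 * π * (p ^ 2 + d)) - (p ^ 2 + d)) / 2)
      Filter.atTop (nhds (4 * π)) := by
    have h1 : Filter.Tendsto (fun p : ℝ => 4 * π - 32 * π ^ 2 / p ^ 2)
        Filter.atTop (nhds (4 * π)) := by
      have h2 : Filter.Tendsto (fun p : ℝ => 32 * π ^ 2 / p ^ 2) Filter.atTop (nhds 0) :=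
        Filter.Tendsto.const_div_atTop (Filter.tendsto_pow_atTop two_ne_zero) _
      simpa using h2.const_sub (4 * π)
    refine tendsto_of_tendsto_of_tendsto_of_le_of_le' h1 tendsto_const_nhds ?_ ?_
    · filter_upwards [Filter.eventually_gt_atTop 0] with p hp
      have h0 := hpos p hp
      have hs := Real.sqrt_pos.mpr h0
      have hsq := Real.sq_sqrt h0.le
      have hl := hle p
      set S := Real.sqrt ((p ^ 2 + d) ^ 2 + 16 * π * (p ^ 2 + d))
      have hp2 : 0 < p ^ 2 := by positivity
      have key : (p ^ 2 + d + 8 * π - S) ≤ 64 * π ^ 2 / p ^ 2 := by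
        rw [le_div_iff₀ hp2]
        have : (p ^ 2 + d + 8 * π - S) * (p ^ 2 + d + 8 * π + S) = 64 * π ^ 2 := by
          linear_combination -hsq
        rw [← this]
        apply mul_le_mul_of_nonneg_left _ (by linarith)
        linarith
      have e : 64 * π ^ 2 / p ^ 2 = 2 * (32 * π ^ 2 / p ^ 2) := by ring
      linarith
    · filter_upwards with p
      have := hle p
      linarith
  refine ⟨integrableOn_Ioi_deriv_of_nonneg hcont hderiv hnn hlim, ?_⟩
  rw [integral_Ioi_of_hasDerivAt_of_nonneg hcont hderiv hnn hlim]
  have e : ((0 : ℝ) ^ 2 + d) ^ 2 + 16 * π * (0 ^ 2 + d) = d * (d + 16 * π) := by ring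
  simp only [e]
  ring
end

section
/- For every d ≥ 0: lim_{M→∞} [∫₀^M (√((p²+d)² + 16π(p²+d)) − (p²+d+8π)) p dp + 16π² ln(2M²)] = d²/4 + 8π² + 4πd − ¼ d√(d(d+16π)) − 2π√(d(d+16π)) + 16π² ln(d + √(d(d+16π)) + 8π). -/
open MeasureTheory Real Filter

lemma energy_hasDerivAt (d : ℝ) (hd : 0 ≤ d) (p : ℝ) (hp : 0 < p) :
    HasDerivAt (fun p : ℝ => ((p ^ 2 + d + 8 * π) *
        Real.sqrt ((p ^ 2 + d) ^ 2 + 16 * π * (p ^ 2 + d)) - (p ^ 2 + d + 8 * π) ^ 2) / 4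
        - 16 * π ^ 2 * Real.log (p ^ 2 + d + 8 * π +
          Real.sqrt ((p ^ 2 + d) ^ 2 + 16 * π * (p ^ 2 + d))))
      ((Real.sqrt ((p ^ 2 + d) ^ 2 + 16 * π * (p ^ 2 + d)) - (p ^ 2 + d + 8 * π)) * p) p := by
  have hpi := Real.pi_pos
  have hx : HasDerivAt (fun p : ℝ => p ^ 2 + d) (2 * p) p := by
    simpa using (hasDerivAt_pow 2 p).add_const d
  have hX : 0 < p ^ 2 + d := by positivity
  have hq : 0 < (p ^ 2 + d) ^ 2 + 16 * π * (p ^ 2 + d) := by positivity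
  have hs := ((hx.pow 2).add (hx.const_mul (16 * π))).sqrt hq.ne'
  have hy := hx.add_const (8 * π)
  have hspos := Real.sqrt_pos.2 hq
  have hl := (hy.add hs).log (by simp only [Pi.add_apply, Pi.pow_apply]; positivity)
  have h := (((hy.mul hs).sub (hy.pow 2)).div_const 4).sub (hl.const_mul (16 * π ^ 2))
  refine HasDerivAt.congr_deriv h ?_
  simp only [Pi.add_apply, Pi.pow_apply]
  have hsq := Real.sq_sqrt hq.le
  set s := Real.sqrt ((p ^ 2 + d) ^ 2 + 16 * π * (p ^ 2 + d)) with hsdef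
  generalize p ^ 2 + d = X at *
  have hne : X + 8 * π + s ≠ 0 := by positivity
  have hs0 : s ≠ 0 := hspos.ne'
  have e : (2 * p + ((2:ℕ) * X ^ (2 - 1) * (2 * p) + 16 * π * (2 * p)) / (2 * s)) / (X + 8 * π + s)
      = 2 * p / s := by
    field_simp
    push_cast
    ring
  rw [e]
  field_simp
  push_cast
  ring_nf
  ring_nf at hsq
  linear_combination (-2 : ℝ) * hsq

lemma energy_tendsto (d : ℝ) (hd : 0 ≤ d) :
    Tendsto (fun p : ℝ => ((p ^ 2 + d + 8 * π) *
        Real.sqrt ((p ^ 2 + d) ^ 2 + 16 * π * (p ^ 2 + d)) - (p ^ 2 + d + 8 * π) ^ 2) / 4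
        - 16 * π ^ 2 * Real.log (p ^ 2 + d + 8 * π +
          Real.sqrt ((p ^ 2 + d) ^ 2 + 16 * π * (p ^ 2 + d)))
        + 16 * π ^ 2 * Real.log (2 * p ^ 2)) atTop (nhds (- 8 * π ^ 2)) := by
  have hpi := Real.pi_pos
  have hsqtop : Tendsto (fun p : ℝ => p ^ 2) atTop atTop := tendsto_pow_atTop two_ne_zero
  have hytop : Tendsto (fun p : ℝ => p ^ 2 + (d + 8 * π)) atTop atTop :=
    tendsto_atTop_add_const_right _ _ hsqtop
  have hcy : Tendsto (fun p : ℝ => 8 * π / (p ^ 2 + (d + 8 * π))) atTop (nhds 0) :=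
    hytop.const_div_atTop _
  have ht : Tendsto (fun p : ℝ => Real.sqrt (1 - (8 * π / (p ^ 2 + (d + 8 * π))) ^ 2))
      atTop (nhds 1) := by
    simpa using ((hcy.pow 2).const_sub 1).sqrt
  have hr : Tendsto (fun p : ℝ => 1 + (d + 8 * π) / p ^ 2) atTop (nhds 1) := by
    simpa using (hsqtop.const_div_atTop (d + 8 * π)).const_add 1
  have hlog : Tendsto (fun p : ℝ => Real.log ((1 + (d + 8 * π) / p ^ 2) *
      (1 + Real.sqrt (1 - (8 * π / (p ^ 2 + (d + 8 * π))) ^ 2)) / 2)) atTop (nhds 0) := by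
    have := (((hr.mul (ht.const_add 1)).div_const 2)).log (by norm_num)
    norm_num at this
    exact this
  have hfr : Tendsto (fun p : ℝ => - 16 * π ^ 2 /
      (1 + Real.sqrt (1 - (8 * π / (p ^ 2 + (d + 8 * π))) ^ 2))) atTop
      (nhds (- 8 * π ^ 2)) := by
    have := (tendsto_const_nhds (x := - 16 * π ^ 2)).div (ht.const_add 1) (by norm_num)
    have e : - 16 * π ^ 2 / (1 + 1) = - 8 * π ^ 2 := by ring
    rw [e] at this
    exact this
  have hall := hfr.sub (hlog.const_mul (16 * π ^ 2))
  rw [mul_zero, sub_zero] at hall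
  refine hall.congr' ?_
  filter_upwards [eventually_gt_atTop 0] with p hp
  have hp2 : 0 < p ^ 2 := by positivity
  have hy : 0 < p ^ 2 + (d + 8 * π) := by positivity
  have hS : Real.sqrt ((p ^ 2 + d) ^ 2 + 16 * π * (p ^ 2 + d)) = (p ^ 2 + (d + 8 * π)) *
      Real.sqrt (1 - (8 * π / (p ^ 2 + (d + 8 * π))) ^ 2) := by
    rw [← Real.sqrt_sq hy.le, ← Real.sqrt_mul (sq_nonneg _), Real.sqrt_sq hy.le]
    congr 1
    field_simp
    ring
  have hin : 0 ≤ 1 - (8 * π / (p ^ 2 + (d + 8 * π))) ^ 2 := by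
    have h1 : 8 * π / (p ^ 2 + (d + 8 * π)) ≤ 1 := by
      rw [div_le_one hy]; linarith
    have h0 : 0 ≤ 8 * π / (p ^ 2 + (d + 8 * π)) := by positivity
    nlinarith
  have htsq := Real.sq_sqrt hin
  have ht0 := Real.sqrt_nonneg (1 - (8 * π / (p ^ 2 + (d + 8 * π))) ^ 2)
  rw [hS]
  generalize Real.sqrt (1 - (8 * π / (p ^ 2 + (d + 8 * π))) ^ 2) = t at *
  have hL : Real.log ((1 + (d + 8 * π) / p ^ 2) * (1 + t) / 2) =
      Real.log (p ^ 2 + d + 8 * π + (p ^ 2 + (d + 8 * π)) * t) - Real.log (2 * p ^ 2) := by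
    rw [← Real.log_div (by positivity) (by positivity)]
    congr 1
    field_simp
    ring
  rw [hL]
  have hA : - 16 * π ^ 2 / (1 + t) =
      ((p ^ 2 + d + 8 * π) * ((p ^ 2 + (d + 8 * π)) * t) - (p ^ 2 + d + 8 * π) ^ 2) / 4 := by
    rw [add_assoc (p ^ 2) d]
    generalize p ^ 2 + (d + 8 * π) = y at *
    have : y ^ 2 * t ^ 2 = y ^ 2 - (8 * π) ^ 2 := by
      rw [htsq]; field_simp
    field_simp
    linear_combination (-1 : ℝ) * this
  rw [hA]
  ring

/-- for every `d ≥ 0`,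
`lim_{M→∞} [∫₀^M (√((p²+d)² + 16π(p²+d)) − (p²+d+8π)) p dp + 16π² ln(2M²)]
  = d²/4 + 8π² + 4πd − ¼ d√(d(d+16π)) − 2π√(d(d+16π)) + 16π² ln(d + √(d(d+16π)) + 8π)`. -/
theorem tendsto_energy_integral_with_log_counterterm (d : ℝ) (hd : 0 ≤ d) :
    Tendsto
      (fun M : ℝ =>
        (∫ p in Set.Ioc (0 : ℝ) M,
            (Real.sqrt ((p ^ 2 + d) ^ 2 + 16 * π * (p ^ 2 + d)) - (p ^ 2 + d + 8 * π)) * p)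
          + 16 * π ^ 2 * Real.log (2 * M ^ 2))
      atTop
      (nhds (d ^ 2 / 4 + 8 * π ^ 2 + 4 * π * d
        - (1 / 4) * d * Real.sqrt (d * (d + 16 * π))
        - 2 * π * Real.sqrt (d * (d + 16 * π))
        + 16 * π ^ 2 * Real.log (d + Real.sqrt (d * (d + 16 * π)) + 8 * π))) := by
  have hpi := Real.pi_pos
  have h := (energy_tendsto d hd).sub_const (((0 ^ 2 + d + 8 * π) *
        Real.sqrt ((0 ^ 2 + d) ^ 2 + 16 * π * (0 ^ 2 + d)) - (0 ^ 2 + d + 8 * π) ^ 2) / 4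
        - 16 * π ^ 2 * Real.log (0 ^ 2 + d + 8 * π +
          Real.sqrt ((0 ^ 2 + d) ^ 2 + 16 * π * (0 ^ 2 + d))))
  have e1 : ((0:ℝ) ^ 2 + d) ^ 2 + 16 * π * (0 ^ 2 + d) = d * (d + 16 * π) := by ring
  have e2 : (0:ℝ) ^ 2 + d + 8 * π + Real.sqrt (d * (d + 16 * π))
      = d + Real.sqrt (d * (d + 16 * π)) + 8 * π := by ring
  have h' := h.congr' (f₂ := fun M : ℝ =>
        (∫ p in Set.Ioc (0 : ℝ) M,
            (Real.sqrt ((p ^ 2 + d) ^ 2 + 16 * π * (p ^ 2 + d)) - (p ^ 2 + d + 8 * π)) * p)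
          + 16 * π ^ 2 * Real.log (2 * M ^ 2)) ?_
  · convert h' using 2
    rw [e1, e2]
    ring
  · filter_upwards [eventually_ge_atTop 0] with M hM
    rw [← intervalIntegral.integral_of_le hM,
      intervalIntegral.integral_eq_sub_of_hasDerivAt_of_le hM ?_
        (fun p hp => energy_hasDerivAt d hd p hp.1) ?_]
    · ring
    · have hl : ContinuousOn (fun p : ℝ => Real.log (p ^ 2 + d + 8 * π +
          Real.sqrt ((p ^ 2 + d) ^ 2 + 16 * π * (p ^ 2 + d)))) (Set.Icc 0 M) := by
        refine ContinuousOn.log (by fun_prop) ?_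
        intro p _
        positivity
      exact ContinuousOn.sub (by fun_prop) (hl.const_mul _)
    · exact Continuous.intervalIntegrable (by fun_prop) _ _
end
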